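/- There is a constant c depending only on ε, θ, γ₁, γ₂, γ₃, γ₄ (polynomial in 1/ε) such that for all sufficiently large n and every sorted state s, the (1+β)-choice-type multidimensional process satisfies the supermartingale inequality ∑_{j=1}^n p_j Γ(sort(r^(j))) ≤ (1 − ε²(1 − 2γ₁)/(4 n (1 + εγ₁))) · Γ(s) + c. -/

import Mathlib

open Real Finset

/-- Nonincreasing rearrangement of a tuple of reals. -/
noncomputable def sortDesc {n : ℕ} (r : Fin n → ℝ) : Fin n → ℝ :=
  fun i => r (Tuple.sort r i.rev)

/-- State update when a ball of total load `f` lands in bin `j`. -/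
noncomputable def upd (n f : ℕ) (s : Fin n → ℝ) (j : Fin n) : Fin n → ℝ :=
  fun i => if i = j then s i + (f : ℝ) * (1 - 1 / n) else s i - (f : ℝ) / n

/-- Potential Φ(s) = ∑_{i=1}^n e^{α s_i}. -/
noncomputable def PhiB (n : ℕ) (α : ℝ) (s : Fin n → ℝ) : ℝ :=
  ∑ i : Fin n, Real.exp (α * s i)

/-- Potential Ψ(s) = ∑_{i=1}^n e^{-α s_i}. -/
noncomputable def PsiB (n : ℕ) (α : ℝ) (s : Fin n → ℝ) : ℝ :=
  ∑ i : Fin n, Real.exp (-α * s i)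

/-- Potential Γ(s) = Φ(s) + Ψ(s). -/
noncomputable def GammaB (n : ℕ) (α : ℝ) (s : Fin n → ℝ) : ℝ :=
  PhiB n α s + PsiB n α s


set_option maxHeartbeats 2000000

lemma sum_sortDesc {n : ℕ} (g : ℝ → ℝ) (r : Fin n → ℝ) :
    ∑ i, g (sortDesc r i) = ∑ i, g (r i) := by
  unfold sortDesc
  exact Equiv.sum_comp (Fin.revPerm.trans (Tuple.sort r)) (fun i => g (r i))

lemma gamma_sort {n : ℕ} (α : ℝ) (r : Fin n → ℝ) :
    GammaB n α (sortDesc r) = GammaB n α r := by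
  unfold GammaB PhiB PsiB
  rw [sum_sortDesc (fun x => Real.exp (α * x)), sum_sortDesc (fun x => Real.exp (-α * x))]

lemma step_sum (n f : ℕ) (β : ℝ) (p s : Fin n → ℝ) (hp : ∑ i, p i = 1) :
    ∑ j, p j * ∑ i, Real.exp (β * upd n f s j i) =
      ∑ i, Real.exp (β * s i) *
        (Real.exp (-(β * f) / n) * (1 + p i * (Real.exp (β * f) - 1))) := by
  simp_rw [Finset.mul_sum]
  rw [Finset.sum_comm]
  refine Finset.sum_congr rfl fun i _ => ?_
  have h : ∀ j, p j * Real.exp (β * upd n f s j i) =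
      Real.exp (β * s i) * Real.exp (-(β * f) / n) *
        (p j + if i = j then p j * (Real.exp (β * f) - 1) else 0) := by
    intro j
    unfold upd
    split_ifs with hij
    · have : β * (s i + (f : ℝ) * (1 - 1 / n)) = β * s i + -(β * f) / n + β * f := by ring
      rw [this, Real.exp_add, Real.exp_add]; ring
    · have : β * (s i - (f : ℝ) / n) = β * s i + -(β * f) / n := by ring
      rw [this, Real.exp_add]; ring
  simp_rw [h]
  rw [← Finset.mul_sum, Finset.sum_add_distrib, hp]
  simp
  ring

lemma jensen_set {ι : Type*} (L : Finset ι) (g : ι → ℝ) (t : ℝ)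
    (h : t * (L.card : ℝ) ≤ ∑ i ∈ L, g i) :
    (L.card : ℝ) * Real.exp t ≤ ∑ i ∈ L, Real.exp (g i) := by
  have h1 : ∀ i ∈ L, Real.exp t * (1 + g i - t) ≤ Real.exp (g i) := by
    intro i _
    have h2 := Real.add_one_le_exp (g i - t)
    have h3 : Real.exp (g i) = Real.exp t * Real.exp (g i - t) := by
      rw [← Real.exp_add]; ring_nf
    rw [h3]
    exact mul_le_mul_of_nonneg_left (by linarith) (Real.exp_pos t).le
  refine le_trans ?_ (Finset.sum_le_sum h1)
  rw [← Finset.mul_sum, Finset.sum_sub_distrib, Finset.sum_add_distrib]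
  simp only [Finset.sum_const, nsmul_eq_mul]
  have := Real.exp_pos t
  nlinarith

lemma exp_absorb (ρ δ : ℝ) (hρ : 1 < ρ) (hδ : 0 < δ) :
    ∃ C : ℝ, 1 ≤ C ∧ ∀ y : ℝ, Real.exp y ≤ δ * Real.exp (ρ * y) + C := by
  refine ⟨1 + Real.exp (-Real.log δ / (ρ - 1)), by linarith [Real.exp_pos (-Real.log δ / (ρ - 1))], ?_⟩
  intro y
  have hr : 0 < ρ - 1 := by linarith
  rcases le_total y (-Real.log δ / (ρ - 1)) with h | h
  · have := Real.exp_le_exp.2 h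
    have : 0 < δ * Real.exp (ρ * y) := by positivity
    linarith
  · have h1 : -Real.log δ ≤ y * (ρ - 1) := by rwa [div_le_iff₀ hr] at h
    have h2 : δ * Real.exp (ρ * y) = Real.exp (Real.log δ + ρ * y) := by
      rw [Real.exp_add, Real.exp_log hδ]
    have h3 : Real.exp y ≤ Real.exp (Real.log δ + ρ * y) := Real.exp_le_exp.2 (by linarith)
    have := Real.exp_pos (-Real.log δ / (ρ - 1))
    linarith

lemma card_lt (n c : ℕ) (h1 : 1 ≤ c) (h2 : c ≤ n) :
    ((Finset.univ.filter (fun i : Fin n => i.1 + 1 < c)).card : ℝ) = c - 1 := by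
  have : (Finset.univ.filter (fun i : Fin n => i.1 + 1 < c)).card = c - 1 := by
    have h := Fin.card_filter_val_lt (n := n) (m := c - 1)
    rw [min_eq_right (by omega)] at h
    rw [← h]; congr 1; ext i; simp; omega
  rw [this]; push_cast [Nat.cast_sub h1]; ring

lemma card_ge (n c : ℕ) (h1 : 1 ≤ c) (h2 : c ≤ n) :
    ((Finset.univ.filter (fun i : Fin n => c ≤ i.1 + 1)).card : ℝ) = n - c + 1 := by
  have h := Finset.card_filter_add_card_filter_not (s := (Finset.univ : Finset (Fin n)))
    (fun i : Fin n => i.1 + 1 < c)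
  have h3 := card_lt n c h1 h2
  simp only [not_lt, Finset.card_univ, Fintype.card_fin] at h
  have h4 : ((Finset.univ.filter (fun i : Fin n => i.1 + 1 < c)).card : ℝ) +
    ((Finset.univ.filter (fun i : Fin n => c ≤ i.1 + 1)).card : ℝ) = n := by exact_mod_cast h
  linarith

lemma ceil_facts (γ : ℝ) (h0 : 0 < γ) (h1 : γ < 1) (n : ℕ) (hn : 0 < (n : ℝ)) :
    1 ≤ ⌈γ * (n : ℝ)⌉₊ ∧ ⌈γ * (n : ℝ)⌉₊ ≤ n ∧ γ * n ≤ ⌈γ * (n : ℝ)⌉₊ ∧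
      (⌈γ * (n : ℝ)⌉₊ : ℝ) < γ * n + 1 := by
  refine ⟨?_, ?_, Nat.le_ceil _, Nat.ceil_lt_add_one (by positivity)⟩
  · exact Nat.one_le_iff_ne_zero.2 (Nat.ceil_pos.2 (by positivity)).ne'
  · exact Nat.ceil_le.2 (by nlinarith)

/-- Upper bound for the Φ cross term. -/
lemma claim_one (ε γ₁ γ₂ γ₃ α ρ δ C : ℝ) (n : ℕ) (p s : Fin n → ℝ)
    (hε0 : 0 < ε) (hε1 : ε ≤ 1 / 4) (hα : 0 < α) (hγ₁ : 0 < γ₁) (h13 : γ₁ < γ₃)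
    (h3 : γ₃ < γ₂) (h2 : γ₂ < 1) (h12 : γ₁ + γ₂ = 1) (hδ : 0 < δ) (hρ : 1 < ρ)
    (hC : 1 ≤ C) (hCy : ∀ y : ℝ, Real.exp y ≤ δ * (γ₁ / 2) * Real.exp (ρ * y) + C)
    (hn : 0 < (n : ℝ)) (hn1 : 2 ≤ ε * γ₁ * n) (hn2 : ρ * (γ₁ * n + 1) ≤ γ₃ * n)
    (hn3 : 1 ≤ (γ₂ - γ₃) * n)
    (hp0 : ∀ i, 0 ≤ p i) (hpm : Monotone p) (hp1 : ∑ i, p i = 1)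
    (hp3 : ∀ k : Fin n, k.1 + 1 = ⌈γ₃ * (n : ℝ)⌉₊ → p k ≤ (1 - ε) / n)
    (hp2 : ∑ i ∈ Finset.univ.filter (fun i : Fin n => i.1 + 1 < ⌈γ₂ * (n : ℝ)⌉₊),
            p i ≤ γ₂ - ε)
    (hs : ∀ i j : Fin n, i ≤ j → s j ≤ s i) (hs0 : ∑ i, s i = 0) :
    ∑ i, p i * Real.exp (α * s i) ≤ (1 - ε) / n * PhiB n α s + (δ * PsiB n α s / n + C) := by
  obtain ⟨a1, a2, a3, a4⟩ := ceil_facts γ₂ (by linarith) h2 n hn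
  obtain ⟨b1, b2, b3, b4⟩ := ceil_facts γ₃ (by linarith) (by linarith) n hn
  set c₂ := ⌈γ₂ * (n : ℝ)⌉₊
  set c₃ := ⌈γ₃ * (n : ℝ)⌉₊
  have hΨ0 : 0 ≤ PsiB n α s := Finset.sum_nonneg fun i _ => (Real.exp_pos _).le
  have hsplit : ∀ g : Fin n → ℝ, ∑ i, g i =
      ∑ i ∈ Finset.univ.filter (fun i : Fin n => i.1 + 1 < c₂), g i +
      ∑ i ∈ Finset.univ.filter (fun i : Fin n => c₂ ≤ i.1 + 1), g i := by
    intro g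
    rw [← Finset.sum_filter_add_sum_filter_not Finset.univ (fun i : Fin n => i.1 + 1 < c₂) g]
    simp only [not_lt]
  by_cases hc : ∀ i : Fin n, c₂ ≤ i.1 + 1 → s i ≤ 0
  · rw [hsplit]
    have hA : ∑ i ∈ Finset.univ.filter (fun i : Fin n => c₂ ≤ i.1 + 1), p i * Real.exp (α * s i)
        ≤ 1 := by
      calc _ ≤ ∑ i ∈ Finset.univ.filter (fun i : Fin n => c₂ ≤ i.1 + 1), p i := by
            refine Finset.sum_le_sum fun i hi => ?_
            have h1 : Real.exp (α * s i) ≤ 1 := by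
              rw [Real.exp_le_one_iff]
              have := hc i (by simpa using hi)
              nlinarith
            have := hp0 i
            nlinarith
        _ ≤ ∑ i, p i := Finset.sum_le_sum_of_subset_of_nonneg (Finset.filter_subset _ _)
              (fun i _ _ => hp0 i)
        _ = 1 := hp1
    have hcard := card_lt n c₂ a1 a2
    set S := Finset.univ.filter (fun i : Fin n => i.1 + 1 < c₂)
    have hanti : AntivaryOn p (fun i => Real.exp (α * s i)) (S : Set (Fin n)) := by
      intro i _ j _ hij
      have h1 : s i < s j := by
        have := Real.exp_lt_exp.1 hij
        exact lt_of_mul_lt_mul_left this hα.le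
      apply hpm
      by_contra hlt
      exact absurd (hs i j (not_le.1 hlt).le) (not_le.2 h1)
    have hch := hanti.card_mul_sum_le_sum_mul_sum
    rw [hcard] at hch
    have hF : ∑ i ∈ S, Real.exp (α * s i) ≤ PhiB n α s :=
      Finset.sum_le_sum_of_subset_of_nonneg (Finset.filter_subset _ _)
        (fun i _ _ => (Real.exp_pos _).le)
    have hF0 : 0 ≤ ∑ i ∈ S, Real.exp (α * s i) := Finset.sum_nonneg fun i _ => (Real.exp_pos _).le
    have hm : 0 < (c₂ : ℝ) - 1 := by nlinarith
    have hkey : (γ₂ - ε) * n ≤ (1 - ε) * ((c₂ : ℝ) - 1) := by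
      have : (γ₂ - ε) * n ≤ (1 - ε) * (γ₂ * n - 1) := by
        have : γ₁ = 1 - γ₂ := by linarith
        rw [this] at hn1
        nlinarith
      nlinarith
    have hfin : ∑ i ∈ S, p i * Real.exp (α * s i) ≤ (1 - ε) / n * PhiB n α s := by
      have e1 : (∑ i ∈ S, p i) * ∑ i ∈ S, Real.exp (α * s i) ≤ (γ₂ - ε) * PhiB n α s := by
        have : 0 ≤ γ₂ - ε := le_trans (Finset.sum_nonneg fun i _ => hp0 i) hp2
        exact mul_le_mul hp2 hF hF0 this
      have e2 : ∑ i ∈ S, p i * Real.exp (α * s i) ≤ (γ₂ - ε) * PhiB n α s / ((c₂ : ℝ) - 1) := by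
        rw [le_div_iff₀ hm]; linarith
      refine e2.trans ?_
      rw [div_mul_eq_mul_div, div_le_div_iff₀ hm hn]
      have := mul_le_mul_of_nonneg_right hkey (hF0.trans hF)
      linarith
    have : 0 ≤ δ * PsiB n α s / n := by positivity
    linarith
  · push Not at hc
    obtain ⟨i₀, hi₀, hsi₀⟩ := hc
    have hpos : ∀ j : Fin n, j.1 + 1 < c₂ → 0 ≤ s j := by
      intro j hj
      have : j ≤ i₀ := by rw [Fin.le_def]; omega
      exact hsi₀.le.trans (hs j i₀ this)
    have hc32 : c₃ < c₂ := by
      have : (c₃ : ℝ) < c₂ := by nlinarith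
      exact_mod_cast this
    let k : Fin n := ⟨c₃ - 1, by omega⟩
    have hk : k.1 + 1 = c₃ := by simp only [k]; omega
    have hD := hpos k (by omega)
    set D := s k
    have hsum1 : γ₃ * n * D ≤ ∑ i ∈ Finset.univ.filter (fun i : Fin n => i.1 + 1 < c₂), s i := by
      have hcd := card_lt n (c₃ + 1) (by omega) (by omega)
      calc γ₃ * n * D ≤ c₃ * D := mul_le_mul_of_nonneg_right b3 hD
        _ = ∑ i ∈ Finset.univ.filter (fun i : Fin n => i.1 + 1 < c₃ + 1), D := by
            rw [Finset.sum_const, nsmul_eq_mul, hcd]; push_cast; ring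
        _ ≤ ∑ i ∈ Finset.univ.filter (fun i : Fin n => i.1 + 1 < c₃ + 1), s i := by
            refine Finset.sum_le_sum fun i hi => hs i k ?_
            have : i.1 + 1 < c₃ + 1 := by simpa using hi
            rw [Fin.le_def]; omega
        _ ≤ _ := by
            refine Finset.sum_le_sum_of_subset_of_nonneg ?_ ?_
            · intro i hi
              simp only [Finset.mem_filter, Finset.mem_univ, true_and] at hi ⊢
              omega
            · intro i hi _
              exact hpos i (by simpa using hi)
    have hcard := card_ge n c₂ a1 a2
    have hss := hsplit s
    rw [hs0] at hss
    set L := Finset.univ.filter (fun i : Fin n => c₂ ≤ i.1 + 1)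
    have hL1 : (L.card : ℝ) ≤ γ₁ * n + 1 := by
      rw [hcard]; have : γ₁ = 1 - γ₂ := by linarith
      rw [this]; linarith
    have hL2 : γ₁ / 2 * n ≤ (L.card : ℝ) := by
      rw [hcard]
      have : γ₁ = 1 - γ₂ := by linarith
      have : 0 < γ₁ * n := by positivity
      nlinarith
    have hJ := jensen_set L (fun i => -α * s i) (ρ * (α * D)) (by
      rw [← Finset.mul_sum]
      have e1 : ρ * (L.card : ℝ) ≤ γ₃ * n :=
        (mul_le_mul_of_nonneg_left hL1 (by linarith)).trans hn2
      have e2 : 0 ≤ α * D := by positivity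
      have e3 := mul_le_mul_of_nonneg_right e1 e2
      have e4 := mul_le_mul_of_nonneg_left hsum1 hα.le
      have e5 : ∑ i ∈ L, s i = - ∑ i ∈ Finset.univ.filter (fun i : Fin n => i.1 + 1 < c₂), s i := by
        linarith
      rw [e5]; linarith)
    have hPsi : ∑ i ∈ L, Real.exp (-α * s i) ≤ PsiB n α s :=
      Finset.sum_le_sum_of_subset_of_nonneg (Finset.filter_subset _ _)
        (fun i _ _ => (Real.exp_pos _).le)
    have hx : Real.exp (α * D) ≤ δ * PsiB n α s / n + C := by
      have e1 := hCy (α * D)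
      have e2 : γ₁ / 2 * n * Real.exp (ρ * (α * D)) ≤ PsiB n α s :=
        le_trans (mul_le_mul_of_nonneg_right hL2 (Real.exp_pos _).le) (hJ.trans hPsi)
      have e3 : δ * (γ₁ / 2) * Real.exp (ρ * (α * D)) ≤ δ * PsiB n α s / n := by
        rw [le_div_iff₀ hn]
        have := mul_le_mul_of_nonneg_left e2 hδ.le
        linarith
      linarith
    have hmain : ∑ i, p i * Real.exp (α * s i) ≤
        ∑ i, ((1 - ε) / n * Real.exp (α * s i) + p i * Real.exp (α * D)) := by
      refine Finset.sum_le_sum fun i _ => ?_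
      have hpi := hp0 i
      have hE := Real.exp_pos (α * s i)
      have hE2 := Real.exp_pos (α * D)
      rcases le_total i k with h | h
      · have e1 := (hpm h).trans (hp3 k hk)
        have e2 := mul_le_mul_of_nonneg_right e1 hE.le
        have : 0 ≤ p i * Real.exp (α * D) := by positivity
        linarith
      · have e1 : Real.exp (α * s i) ≤ Real.exp (α * D) :=
          Real.exp_le_exp.2 (mul_le_mul_of_nonneg_left (hs k i h) hα.le)
        have e2 := mul_le_mul_of_nonneg_left e1 hpi
        have : 0 ≤ (1 - ε) / n * Real.exp (α * s i) :=
          mul_nonneg (div_nonneg (by linarith) hn.le) hE.le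
        linarith
    rw [Finset.sum_add_distrib, ← Finset.mul_sum, ← Finset.sum_mul, hp1, one_mul] at hmain
    unfold PhiB
    linarith

/-- Lower bound for the Ψ cross term. -/
lemma claim_two (ε γ₁ γ₂ γ₃ γ₄ α ρ δ C : ℝ) (n : ℕ) (p s : Fin n → ℝ)
    (hε0 : 0 < ε) (hε1 : ε ≤ 1 / 4) (hα : 0 < α) (hγ₁ : 0 < γ₁) (h13 : γ₁ < γ₃)
    (h14 : γ₁ < γ₄) (h41 : γ₄ < 1) (h34 : γ₃ + γ₄ = 1)
    (h2 : γ₂ < 1) (h02 : 0 < γ₂) (h12 : γ₁ + γ₂ = 1) (hδ : 0 < δ) (hρ : 1 < ρ)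
    (hC : 1 ≤ C) (hCy : ∀ y : ℝ, Real.exp y ≤ δ * (γ₁ / 2) * Real.exp (ρ * y) + C)
    (hn : 0 < (n : ℝ)) (hn1 : 2 ≤ ε * γ₁ * n) (hn2 : ρ * (γ₁ * n + 1) ≤ γ₃ * n)
    (hn4 : 2 ≤ γ₁ * n)
    (hp0 : ∀ i, 0 ≤ p i) (hpm : Monotone p)
    (hp4 : ∀ k : Fin n, k.1 + 1 = ⌈γ₄ * (n : ℝ)⌉₊ → (1 + ε) / n ≤ p k)
    (hp2 : γ₂ + ε ≤ ∑ i ∈ Finset.univ.filter (fun i : Fin n => ⌈γ₁ * (n : ℝ)⌉₊ ≤ i.1 + 1), p i)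
    (hs : ∀ i j : Fin n, i ≤ j → s j ≤ s i) (hs0 : ∑ i, s i = 0) :
    (1 + ε) / n * PsiB n α s - (1 + ε) * (δ * PhiB n α s / n + C) ≤
      ∑ i, p i * Real.exp (-α * s i) := by
  obtain ⟨a1, a2, a3, a4⟩ := ceil_facts γ₁ hγ₁ (by linarith) n hn
  obtain ⟨b1, b2, b3, b4⟩ := ceil_facts γ₄ (by linarith) (by linarith) n hn
  have hc14 : ⌈γ₁ * (n : ℝ)⌉₊ ≤ ⌈γ₄ * (n : ℝ)⌉₊ := Nat.ceil_mono (by nlinarith)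
  set c₁ := ⌈γ₁ * (n : ℝ)⌉₊
  set c₄ := ⌈γ₄ * (n : ℝ)⌉₊
  have hΦ0 : 0 ≤ PhiB n α s := Finset.sum_nonneg fun i _ => (Real.exp_pos _).le
  have hsplit : ∀ g : Fin n → ℝ, ∑ i, g i =
      ∑ i ∈ Finset.univ.filter (fun i : Fin n => i.1 + 1 < c₁), g i +
      ∑ i ∈ Finset.univ.filter (fun i : Fin n => c₁ ≤ i.1 + 1), g i := by
    intro g
    rw [← Finset.sum_filter_add_sum_filter_not Finset.univ (fun i : Fin n => i.1 + 1 < c₁) g]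
    simp only [not_lt]
  have hcl := card_lt n c₁ a1 a2
  by_cases hc : ∀ i : Fin n, i.1 + 1 < c₁ → 0 ≤ s i
  · have hPs := hsplit (fun i => Real.exp (-α * s i))
    have hA : ∑ i ∈ Finset.univ.filter (fun i : Fin n => i.1 + 1 < c₁), Real.exp (-α * s i)
        ≤ n := by
      calc _ ≤ ∑ i ∈ Finset.univ.filter (fun i : Fin n => i.1 + 1 < c₁), (1 : ℝ) := by
            refine Finset.sum_le_sum fun i hi => ?_
            rw [Real.exp_le_one_iff]
            have := hc i (by simpa using hi)
            nlinarith
        _ = c₁ - 1 := by rw [Finset.sum_const, nsmul_eq_mul, hcl, mul_one]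
        _ ≤ n := by have : (c₁ : ℝ) ≤ n := by exact_mod_cast a2
                    linarith
    have hcard := card_ge n c₁ a1 a2
    set S := Finset.univ.filter (fun i : Fin n => c₁ ≤ i.1 + 1)
    have hmono : MonovaryOn p (fun i => Real.exp (-α * s i)) (S : Set (Fin n)) := by
      intro i _ j _ hij
      have h1 : s j < s i := by
        have := Real.exp_lt_exp.1 hij
        nlinarith
      apply hpm
      by_contra hlt
      exact absurd (hs j i (not_le.1 hlt).le) (not_le.2 h1)
    have hch := hmono.sum_mul_sum_le_card_mul_sum
    rw [hcard] at hch
    have hF0 : 0 ≤ ∑ i ∈ S, Real.exp (-α * s i) := Finset.sum_nonneg fun i _ => (Real.exp_pos _).le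
    have hF : PsiB n α s - n ≤ ∑ i ∈ S, Real.exp (-α * s i) := by
      unfold PsiB; linarith
    have hm : 0 < (n : ℝ) - c₁ + 1 := by
      have : (c₁ : ℝ) ≤ n := by exact_mod_cast a2
      linarith
    have hkey : (1 + ε) * ((n : ℝ) - c₁ + 1) ≤ (γ₂ + ε) * n := by
      have : (1 + ε) * (γ₂ * n + 1) ≤ (γ₂ + ε) * n := by
        have : γ₁ = 1 - γ₂ := by linarith
        rw [this] at hn1
        nlinarith
      have : γ₁ = 1 - γ₂ := by linarith
      rw [this] at a3
      nlinarith
    have hfin : (1 + ε) / n * ∑ i ∈ S, Real.exp (-α * s i) ≤ ∑ i ∈ S, p i * Real.exp (-α * s i) := by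
      have e1 := mul_le_mul_of_nonneg_right hp2 hF0
      have e2 : (γ₂ + ε) * (∑ i ∈ S, Real.exp (-α * s i)) / ((n : ℝ) - c₁ + 1) ≤
          ∑ i ∈ S, p i * Real.exp (-α * s i) := by
        rw [div_le_iff₀ hm]; linarith
      refine le_trans ?_ e2
      rw [div_mul_eq_mul_div, div_le_div_iff₀ hn hm]
      have := mul_le_mul_of_nonneg_right hkey hF0
      linarith
    have hsub : ∑ i ∈ S, p i * Real.exp (-α * s i) ≤ ∑ i, p i * Real.exp (-α * s i) :=
      Finset.sum_le_sum_of_subset_of_nonneg (Finset.filter_subset _ _)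
        (fun i _ _ => mul_nonneg (hp0 i) (Real.exp_pos _).le)
    have e3 : (1 + ε) / n * (PsiB n α s - n) ≤ (1 + ε) / n * ∑ i ∈ S, Real.exp (-α * s i) :=
      mul_le_mul_of_nonneg_left hF (by positivity)
    have e4 : (1 + ε) / n * (PsiB n α s - n) = (1 + ε) / n * PsiB n α s - (1 + ε) := by
      field_simp
    have e5 : 0 ≤ δ * PhiB n α s / n := by positivity
    have e6 : (1 + ε) * 1 ≤ (1 + ε) * (δ * PhiB n α s / n + C) :=
      mul_le_mul_of_nonneg_left (by linarith) (by linarith)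
    linarith
  · push Not at hc
    obtain ⟨i₀, hi₀, hsi₀⟩ := hc
    have hneg : ∀ j : Fin n, c₁ ≤ j.1 + 1 → s j ≤ 0 := by
      intro j hj
      have : i₀ ≤ j := by rw [Fin.le_def]; omega
      exact (hs i₀ j this).trans hsi₀.le
    let k : Fin n := ⟨c₄ - 1, by omega⟩
    have hk : k.1 + 1 = c₄ := by simp only [k]; omega
    have hD : 0 ≤ -s k := by linarith [hneg k (by omega)]
    obtain ⟨D, hDdef⟩ : ∃ D, D = -s k := ⟨_, rfl⟩
    rw [← hDdef] at hD
    have hsum1 : γ₃ * n * D ≤ ∑ i ∈ Finset.univ.filter (fun i : Fin n => c₁ ≤ i.1 + 1), -s i := by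
      have hcd := card_ge n c₄ b1 b2
      have hle : γ₃ * n ≤ (n : ℝ) - c₄ + 1 := by
        have : γ₃ = 1 - γ₄ := by linarith
        rw [this]; linarith
      calc γ₃ * n * D ≤ ((n : ℝ) - c₄ + 1) * D := mul_le_mul_of_nonneg_right hle hD
        _ = ∑ i ∈ Finset.univ.filter (fun i : Fin n => c₄ ≤ i.1 + 1), D := by
            rw [Finset.sum_const, nsmul_eq_mul, hcd]
        _ ≤ ∑ i ∈ Finset.univ.filter (fun i : Fin n => c₄ ≤ i.1 + 1), -s i := by
            refine Finset.sum_le_sum fun i hi => ?_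
            have : c₄ ≤ i.1 + 1 := by simpa using hi
            have := hs k i (by rw [Fin.le_def]; omega)
            linarith
        _ ≤ _ := by
            refine Finset.sum_le_sum_of_subset_of_nonneg ?_ ?_
            · intro i hi
              simp only [Finset.mem_filter, Finset.mem_univ, true_and] at hi ⊢
              omega
            · intro i hi _
              have := hneg i (by simpa using hi)
              linarith
    have hss := hsplit s
    rw [hs0] at hss
    rw [Finset.sum_neg_distrib] at hsum1
    set L := Finset.univ.filter (fun i : Fin n => i.1 + 1 < c₁)
    have hL1 : (L.card : ℝ) ≤ γ₁ * n + 1 := by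
      rw [hcl]; linarith
    have hL2 : γ₁ / 2 * n ≤ (L.card : ℝ) := by
      rw [hcl]; linarith
    have hJ := jensen_set L (fun i => α * s i) (ρ * (α * D)) (by
      rw [← Finset.mul_sum]
      have e1 : ρ * (L.card : ℝ) ≤ γ₃ * n :=
        (mul_le_mul_of_nonneg_left hL1 (by linarith)).trans hn2
      have e2 : 0 ≤ α * D := by positivity
      have e3 := mul_le_mul_of_nonneg_right e1 e2
      have e4 := mul_le_mul_of_nonneg_left hsum1 hα.le
      have e5 : ∑ i ∈ L, s i = - ∑ i ∈ Finset.univ.filter (fun i : Fin n => c₁ ≤ i.1 + 1), s i := by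
        linarith
      rw [e5]; linarith)
    have hPhi : ∑ i ∈ L, Real.exp (α * s i) ≤ PhiB n α s :=
      Finset.sum_le_sum_of_subset_of_nonneg (Finset.filter_subset _ _)
        (fun i _ _ => (Real.exp_pos _).le)
    have hx : Real.exp (α * D) ≤ δ * PhiB n α s / n + C := by
      have e1 := hCy (α * D)
      have e2 : γ₁ / 2 * n * Real.exp (ρ * (α * D)) ≤ PhiB n α s :=
        le_trans (mul_le_mul_of_nonneg_right hL2 (Real.exp_pos _).le) (hJ.trans hPhi)
      have e3 : δ * (γ₁ / 2) * Real.exp (ρ * (α * D)) ≤ δ * PhiB n α s / n := by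
        rw [le_div_iff₀ hn]
        have := mul_le_mul_of_nonneg_left e2 hδ.le
        linarith
      linarith
    have hmain : ∑ i : Fin n, ((1 + ε) / n * Real.exp (-α * s i) - (1 + ε) / n * Real.exp (α * D)) ≤
        ∑ i, p i * Real.exp (-α * s i) := by
      refine Finset.sum_le_sum fun i _ => ?_
      have hpi := hp0 i
      have hE := Real.exp_pos (-α * s i)
      have hE2 := Real.exp_pos (α * D)
      have hq : 0 ≤ (1 + ε) / n := by positivity
      rcases le_total k i with h | h
      · have e1 := (hp4 k hk).trans (hpm h)
        have e2 := mul_le_mul_of_nonneg_right e1 hE.le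
        have : 0 ≤ (1 + ε) / n * Real.exp (α * D) := by positivity
        linarith
      · have e1 : Real.exp (-α * s i) ≤ Real.exp (α * D) := by
          refine Real.exp_le_exp.2 ?_
          have := hs i k h
          rw [hDdef]; nlinarith
        have e2 := mul_le_mul_of_nonneg_left e1 hq
        have : 0 ≤ p i * Real.exp (-α * s i) := mul_nonneg hpi hE.le
        linarith
    rw [Finset.sum_sub_distrib, ← Finset.mul_sum, Finset.sum_const, nsmul_eq_mul,
      Finset.card_univ, Fintype.card_fin] at hmain
    have e7 : (n : ℝ) * ((1 + ε) / n * Real.exp (α * D)) = (1 + ε) * Real.exp (α * D) := by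
      field_simp
    rw [e7] at hmain
    have e8 := mul_le_mul_of_nonneg_left hx (by linarith : (0:ℝ) ≤ 1 + ε)
    unfold PsiB
    linarith

lemma exp_bd (x : ℝ) (hx : |x| ≤ 1 / 8) : Real.exp x ≤ 1 + x + 0.6 * x ^ 2 := by
  have h := Real.exp_bound (x := x) (by linarith) (n := 3) (by norm_num)
  have h2 := (abs_le.1 h).2
  simp only [Finset.sum_range_succ, Finset.sum_range_zero] at h2
  norm_num [Nat.factorial] at h2
  have h3 : |x| ^ 3 ≤ 1 / 8 * x ^ 2 := by
    have : |x| ^ 3 = |x| * x ^ 2 := by rw [← sq_abs x]; ring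
    rw [this]; exact mul_le_mul_of_nonneg_right hx (sq_nonneg x)
  nlinarith [sq_nonneg x]

lemma poly_cube (a : ℝ) (h8 : a ≤ 1 / 8) : a ^ 3 ≤ 1 / 8 * a ^ 2 := by
  have : a ^ 3 = a * a ^ 2 := by ring
  rw [this]; exact mul_le_mul_of_nonneg_right h8 (sq_nonneg a)

lemma poly_B (a : ℝ) (h0 : 0 < a) (h8 : a ≤ 1 / 8) : 0 ≤ a - 0.6 * a ^ 2 := by nlinarith

lemma poly_X (a : ℝ) (h0 : 0 < a) (h8 : a ≤ 1 / 8) :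
    (a + 0.6 * a ^ 2) * (1 - 2 * a) - a + a ^ 2 / 10
      + (a - 0.6 * a ^ 2) * (1 + 2 * a) * (0.05 * a) + a ^ 2 ≤ 0 := by
  have h2 : 0 < a ^ 2 := by positivity
  have h3 : 0 < a ^ 3 := by positivity
  have h4 : 0 < a ^ 4 := by positivity
  have h5 := poly_cube a h8
  ring_nf
  linarith

lemma poly_Y (a : ℝ) (h0 : 0 < a) (h8 : a ≤ 1 / 8) :
    a + a ^ 2 / 10 - (a - 0.6 * a ^ 2) * (1 + 2 * a)
      + (a + 0.6 * a ^ 2) * (0.05 * a) + a ^ 2 ≤ 0 := by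
  have h2 : 0 < a ^ 2 := by positivity
  have h5 := poly_cube a h8
  ring_nf
  linarith

lemma poly_C (a : ℝ) (h0 : 0 < a) (h8 : a ≤ 1 / 8) :
    (a + 0.6 * a ^ 2) + (a - 0.6 * a ^ 2) * (1 + 2 * a) ≤ 4 := by
  have h3 : 0 < a ^ 3 := by positivity
  have h2 : a ^ 2 ≤ 1 := by nlinarith
  ring_nf
  linarith

/-- Theorem `thm-super-mart-beta`: supermartingale inequality for Γ in the
(1+β)-choice-type multidimensional process. -/
theorem stmt18 (f : ℕ) (hf : 0 < f) (ε θ γ₁ γ₂ γ₃ γ₄ : ℝ)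
    (hε0 : 0 < ε) (hε1 : ε ≤ 1 / 4) (hθ : 1 < θ)
    (hγ₁ : 0 < γ₁) (h13 : γ₁ < γ₃) (h3 : γ₃ < 1 / 2) (h4 : (1 : ℝ) / 2 < γ₄)
    (h42 : γ₄ < γ₂) (h2 : γ₂ < 1) (hθγ : θ * γ₁ = 1) (h12 : γ₁ + γ₂ = 1)
    (h34 : γ₃ + γ₄ = 1) (α : ℝ) (hα : α = ε / (2 * f)) :
    ∃ c : ℝ, 0 < c ∧ ∃ N : ℕ, ∀ n : ℕ, N ≤ n →
      ∀ p s : Fin n → ℝ,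
        (∀ i, 0 ≤ p i) → Monotone p → (∑ i, p i = 1) →
        (∀ k : Fin n, k.1 + 1 = ⌈γ₃ * (n : ℝ)⌉₊ → p k ≤ (1 - θ * ε) / n) →
        (∀ k : Fin n, k.1 + 1 = ⌈γ₄ * (n : ℝ)⌉₊ → (1 + θ * ε) / n ≤ p k) →
        (∑ i ∈ Finset.univ.filter (fun i : Fin n => i.1 + 1 < ⌈γ₂ * (n : ℝ)⌉₊),
            p i ≤ γ₂ - ε) →
        (γ₂ + ε ≤
          ∑ i ∈ Finset.univ.filter (fun i : Fin n => ⌈γ₁ * (n : ℝ)⌉₊ ≤ i.1 + 1),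
            p i) →
        (∀ i j : Fin n, i ≤ j → s j ≤ s i) → (∑ i, s i = 0) →
        ∑ j : Fin n, p j * GammaB n α (sortDesc (upd n f s j)) ≤
          (1 - ε ^ 2 * (1 - 2 * γ₁) / (4 * n * (1 + ε * γ₁))) * GammaB n α s +
            c := by
  have hf' : (0 : ℝ) < f := by exact_mod_cast hf
  obtain ⟨a, ha⟩ : ∃ a : ℝ, a = ε / 2 := ⟨_, rfl⟩
  have haf : α * f = a := by rw [hα, ha]; field_simp
  have hα0 : 0 < α := by rw [hα]; positivity
  have ha0 : 0 < a := by linarith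
  have ha8 : a ≤ 1 / 8 := by linarith
  have hε : ε = 2 * a := by linarith
  obtain ⟨ρ, hρd⟩ : ∃ ρ : ℝ, ρ = (γ₁ + γ₃) / (2 * γ₁) := ⟨_, rfl⟩
  have hρ : 1 < ρ := by rw [hρd, lt_div_iff₀ (by positivity)]; linarith
  have hργ : ρ * γ₁ = (γ₁ + γ₃) / 2 := by rw [hρd]; field_simp
  obtain ⟨C, hC1, hCy⟩ := exp_absorb ρ (0.05 * a * (γ₁ / 2)) hρ (by positivity)
  have hg31 : 0 < γ₃ - γ₁ := by linarith
  have hg23 : 0 < γ₂ - γ₃ := by linarith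
  obtain ⟨N, hN⟩ := exists_nat_ge
    (10 + 2 / (ε * γ₁) + 2 * ρ / (γ₃ - γ₁) + 1 / (γ₂ - γ₃) + 2 / γ₁)
  refine ⟨4 * C, by linarith, N, ?_⟩
  intro n hNn p s hp0 hpm hp1 hp3 hp4 hp2 hp1' hs hs0
  have hNn' : (N : ℝ) ≤ n := by exact_mod_cast hNn
  have t1 : 0 < 2 / (ε * γ₁) := by positivity
  have t2 : 0 < 2 * ρ / (γ₃ - γ₁) := by positivity
  have t3 : 0 < 1 / (γ₂ - γ₃) := by positivity
  have t4 : 0 < 2 / γ₁ := by positivity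
  have hn10 : (10 : ℝ) ≤ n := by linarith
  have hn : (0 : ℝ) < n := by linarith
  have hn1 : 2 ≤ ε * γ₁ * n := by
    have : 2 / (ε * γ₁) ≤ n := by linarith
    rw [div_le_iff₀ (by positivity)] at this; linarith
  have hn2 : ρ * (γ₁ * n + 1) ≤ γ₃ * n := by
    have : 2 * ρ / (γ₃ - γ₁) ≤ n := by linarith
    rw [div_le_iff₀ (by positivity)] at this
    have e : ρ * (γ₁ * n + 1) = (γ₁ + γ₃) / 2 * n + ρ := by rw [← hργ]; ring
    rw [e]; linarith
  have hn3 : 1 ≤ (γ₂ - γ₃) * n := by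
    have : 1 / (γ₂ - γ₃) ≤ n := by linarith
    rw [div_le_iff₀ (by positivity)] at this; linarith
  have hn4 : 2 ≤ γ₁ * n := by
    have : 2 / γ₁ ≤ n := by linarith
    rw [div_le_iff₀ (by positivity)] at this; linarith
  have hθε : ε ≤ θ * ε := le_mul_of_one_le_left hε0.le hθ.le
  have c1 := claim_one ε γ₁ γ₂ γ₃ α ρ (0.05 * a) C n p s hε0 hε1 hα0 hγ₁ h13 (by linarith) h2 h12
    (by positivity) hρ hC1 hCy hn hn1 hn2 hn3 hp0 hpm hp1
    (fun k hk => (hp3 k hk).trans (by gcongr)) hp2 hs hs0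
  have c2 := claim_two ε γ₁ γ₂ γ₃ γ₄ α ρ (0.05 * a) C n p s hε0 hε1 hα0 hγ₁ h13 (by linarith)
    (by linarith) h34 h2 (by linarith) h12
    (by positivity) hρ hC1 hCy hn hn1 hn2 hn4 hp0 hpm
    (fun k hk => le_trans (by gcongr) (hp4 k hk)) hp1' hs hs0
  have hΦ0 : 0 ≤ PhiB n α s := Finset.sum_nonneg fun i _ => (Real.exp_pos _).le
  have hΨ0 : 0 ≤ PsiB n α s := Finset.sum_nonneg fun i _ => (Real.exp_pos _).le
  have han0 : 0 < a / n := by positivity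
  have han : a / n ≤ 1 / 8 := by
    rw [div_le_iff₀ hn]; linarith
  have hsq : (a / n) ^ 2 ≤ a ^ 2 / 10 / n := by
    rw [div_pow, div_div, div_le_div_iff₀ (by positivity) (by positivity)]
    have : 0 < a ^ 2 := by positivity
    have h5 : 10 * (n : ℝ) ≤ n ^ 2 := by
      rw [sq]; exact mul_le_mul_of_nonneg_right hn10 hn.le
    exact mul_le_mul_of_nonneg_left h5 this.le
  -- split of the expected potential
  have hLHS : ∑ j : Fin n, p j * GammaB n α (sortDesc (upd n f s j)) =
      (∑ j, p j * ∑ i, Real.exp (α * upd n f s j i)) +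
      ∑ j, p j * ∑ i, Real.exp (-α * upd n f s j i) := by
    rw [← Finset.sum_add_distrib]
    refine Finset.sum_congr rfl fun j _ => ?_
    rw [gamma_sort]; unfold GammaB PhiB PsiB; ring
  rw [hLHS, step_sum n f α p s hp1, step_sum n f (-α) p s hp1]
  have hnaf : -α * f = -a := by rw [← haf]; ring
  rw [haf, hnaf, neg_neg]
  have d1 : ∑ i, Real.exp (α * s i) * (Real.exp (-a / n) * (1 + p i * (Real.exp a - 1))) ≤
      (1 - a / n + a ^ 2 / 10 / n) * PhiB n α s +
        (a + 0.6 * a ^ 2) * ∑ i, p i * Real.exp (α * s i) := by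
    unfold PhiB
    rw [Finset.mul_sum, Finset.mul_sum, ← Finset.sum_add_distrib]
    refine Finset.sum_le_sum fun i _ => ?_
    have hE := Real.exp_pos (α * s i)
    have b1 : Real.exp (-a / n) ≤ 1 - a / n + a ^ 2 / 10 / n := by
      have := exp_bd (-a / n) (by rw [neg_div, abs_neg, abs_of_pos han0]; exact han)
      have e : -a / n = -(a / n) := by ring
      rw [e] at this ⊢
      rw [neg_sq] at this
      linarith [sq_nonneg (a / n)]
    have b2 : Real.exp (-a / n) ≤ 1 := by
      rw [Real.exp_le_one_iff, neg_div]; linarith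
    have b3 : Real.exp a - 1 ≤ a + 0.6 * a ^ 2 := by
      have := exp_bd a (by rw [abs_of_pos ha0]; exact ha8)
      linarith
    have b4 : 0 ≤ Real.exp a - 1 := by linarith [Real.add_one_le_exp a]
    have b5 : p i * (Real.exp a - 1) ≤ p i * (a + 0.6 * a ^ 2) :=
      mul_le_mul_of_nonneg_left b3 (hp0 i)
    have b6 : Real.exp (-a / n) * (p i * (Real.exp a - 1)) ≤ 1 * (p i * (Real.exp a - 1)) :=
      mul_le_mul_of_nonneg_right b2 (mul_nonneg (hp0 i) b4)
    have b7 : Real.exp (-a / n) * (1 + p i * (Real.exp a - 1)) ≤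
        (1 - a / n + a ^ 2 / 10 / n) + p i * (a + 0.6 * a ^ 2) := by linarith
    have := mul_le_mul_of_nonneg_left b7 hE.le
    linarith
  have d2 : ∑ i, Real.exp (-α * s i) * (Real.exp (a / n) * (1 + p i * (Real.exp (-a) - 1))) ≤
      (1 + a / n + a ^ 2 / 10 / n) * PsiB n α s -
        (a - 0.6 * a ^ 2) * ∑ i, p i * Real.exp (-α * s i) := by
    unfold PsiB
    rw [Finset.mul_sum, Finset.mul_sum, ← Finset.sum_sub_distrib]
    refine Finset.sum_le_sum fun i _ => ?_
    have hE := Real.exp_pos (-α * s i)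
    have b1 : Real.exp (a / n) ≤ 1 + a / n + a ^ 2 / 10 / n := by
      have := exp_bd (a / n) (by rw [abs_of_pos han0]; exact han)
      linarith [sq_nonneg (a / n)]
    have b2 : 1 ≤ Real.exp (a / n) := Real.one_le_exp han0.le
    have b3 : a - 0.6 * a ^ 2 ≤ 1 - Real.exp (-a) := by
      have := exp_bd (-a) (by rw [abs_neg, abs_of_pos ha0]; exact ha8)
      rw [neg_sq] at this
      linarith
    have b4 : 0 ≤ 1 - Real.exp (-a) := by
      have : Real.exp (-a) ≤ 1 := by rw [Real.exp_le_one_iff]; linarith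
      linarith
    have b5 : p i * (a - 0.6 * a ^ 2) ≤ p i * (1 - Real.exp (-a)) :=
      mul_le_mul_of_nonneg_left b3 (hp0 i)
    have b6 : 1 * (p i * (1 - Real.exp (-a))) ≤ Real.exp (a / n) * (p i * (1 - Real.exp (-a))) :=
      mul_le_mul_of_nonneg_right b2 (mul_nonneg (hp0 i) b4)
    have b7 : Real.exp (a / n) * (1 + p i * (Real.exp (-a) - 1)) ≤
        (1 + a / n + a ^ 2 / 10 / n) - p i * (a - 0.6 * a ^ 2) := by linarith
    have := mul_le_mul_of_nonneg_left b7 hE.le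
    linarith
  obtain ⟨X, hX⟩ : ∃ X, X = PhiB n α s / n := ⟨_, rfl⟩
  obtain ⟨Y, hY⟩ : ∃ Y, Y = PsiB n α s / n := ⟨_, rfl⟩
  have hX0 : 0 ≤ X := by rw [hX]; positivity
  have hY0 : 0 ≤ Y := by rw [hY]; positivity
  have hA0 : 0 ≤ a + 0.6 * a ^ 2 := by positivity
  have hB0 : 0 ≤ a - 0.6 * a ^ 2 := poly_B a ha0 ha8
  have c1' : ∑ i, p i * Real.exp (α * s i) ≤ (1 - 2 * a) * X + (0.05 * a * Y + C) := by
    rw [hX, hY, ← hε]; refine c1.trans (le_of_eq ?_); ring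
  have c2' : (1 + 2 * a) * Y - (1 + 2 * a) * (0.05 * a * X + C) ≤
      ∑ i, p i * Real.exp (-α * s i) := by
    rw [hX, hY, ← hε]; refine le_trans (le_of_eq ?_) c2; ring
  have f1 := mul_le_mul_of_nonneg_left c1' hA0
  have f2 := mul_le_mul_of_nonneg_left c2' hB0
  have g1 : (1 - a / n + a ^ 2 / 10 / n) * PhiB n α s =
      PhiB n α s + (-a + a ^ 2 / 10) * X := by rw [hX]; ring
  have g2 : (1 + a / n + a ^ 2 / 10 / n) * PsiB n α s =
      PsiB n α s + (a + a ^ 2 / 10) * Y := by rw [hY]; ring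
  have hκ : ε ^ 2 * (1 - 2 * γ₁) / (4 * n * (1 + ε * γ₁)) * GammaB n α s ≤ a ^ 2 * (X + Y) := by
    have e1 : ε ^ 2 * (1 - 2 * γ₁) / (4 * n * (1 + ε * γ₁)) ≤ a ^ 2 / n := by
      rw [div_le_div_iff₀ (by positivity) hn, hε]
      have q0 : 0 ≤ 2 * a * γ₁ := by positivity
      have q : 1 - 2 * γ₁ ≤ 1 + 2 * a * γ₁ := by linarith
      have := mul_le_mul_of_nonneg_left q (by positivity : 0 ≤ 4 * a ^ 2 * n)
      linarith
    have e2 : a ^ 2 * (X + Y) = a ^ 2 / n * GammaB n α s := by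
      rw [hX, hY]; unfold GammaB; ring
    rw [e2]
    exact mul_le_mul_of_nonneg_right e1 (add_nonneg hΦ0 hΨ0)
  have hG : GammaB n α s = PhiB n α s + PsiB n α s := rfl
  have hX1 : ((a + 0.6 * a ^ 2) * (1 - 2 * a) - a + a ^ 2 / 10
      + (a - 0.6 * a ^ 2) * (1 + 2 * a) * (0.05 * a) + a ^ 2) * X ≤ 0 := by
    exact mul_nonpos_of_nonpos_of_nonneg (poly_X a ha0 ha8) hX0
  have hY1 : (a + a ^ 2 / 10 - (a - 0.6 * a ^ 2) * (1 + 2 * a)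
      + (a + 0.6 * a ^ 2) * (0.05 * a) + a ^ 2) * Y ≤ 0 := by
    exact mul_nonpos_of_nonpos_of_nonneg (poly_Y a ha0 ha8) hY0
  have hCC : ((a + 0.6 * a ^ 2) + (a - 0.6 * a ^ 2) * (1 + 2 * a)) * C ≤ 4 * C := by
    exact mul_le_mul_of_nonneg_right (poly_C a ha0 ha8) (by linarith)
  rw [sub_mul, one_mul]
  linarith
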